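/- Fix d ≥ 2 and t with -1/(d-1) ≤ t ≤ 0. For λ in the simplex Σ_d, let g_1(λ), …, g_d(λ) be the eigenvalues of the d×d Hermitian matrix G(λ) with entries G_{αβ} = (c₁ + c₂·λ_α)·δ_{αβ} + t²·√(λ_α·λ_β), and set S₂(λ) = −∑_{α=1}^d g_α(λ)·log g_α(λ). Then S₂ is Schur-concave on Σ_d: if λ is majorized by λ′, then S₂(λ) ≥ S₂(λ′). -/

import Mathlib

/-!
The entropy `∑ -g_i log g_i` of a non-negative spectrum of fixed sum is controlled by the
determinants `∏ (s + g_i)`, `s > 0`: up to boundary terms that cancel, it is the integral of their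
logarithms over `s` (`sum_negMulLog_le`). Since the trace of `G(λ)` is the same for all `λ` in the
simplex, it suffices that `λ ↦ det (s + G(λ))` is positive and Schur-concave for every `s > 0`.

As `G(λ)` is a rank-one perturbation of a diagonal matrix, with `μ_a = c - k λ_a`, `c = s + c₁`,
`k = -c₂`, `q = t²` one has `det (s + G(λ)) = ∏ μ_a + q ∑ λ_a ∏_{b ≠ a} μ_b` (`detPoly`,
`prod_shift_eigenvalues`). This is symmetric in `λ`, and for fixed `λ_i + λ_j` and fixed other
entries it is affine in the product `λ_i λ_j`. Its slope is non-negative (`coeff_nonneg`): at most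
one of the remaining factors `μ_a` is non-positive, and in that case bounding the other factors
below leaves a polynomial inequality in one variable. The hypothesis `-1/(d-1) ≤ t` enters as `-t ≤ (1 - t)/d`. So
`detPoly` increases along transfers towards equality (`detPoly_transfer`), and majorization is
generated by such transfers and permutations (`le_of_prefix_sums`). The same bound gives positivity
of the determinants (`detPoly_pos`), hence non-negativity of the spectrum.
-/

open Matrix

/-- The matrix `G(λ)` with entries `G_{αβ} = (c₁ + c₂ λ_α) δ_{αβ} + t² √(λ_α λ_β)`,
where `c₁ = (1-t)²/d²` and `c₂ = 2t(1-t)/d`. -/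
noncomputable def Gmat (d : ℕ) (t : ℝ) (lam : Fin d → ℝ) : Matrix (Fin d) (Fin d) ℝ :=
  Matrix.of fun α β =>
    (if α = β then (1 - t) ^ 2 / (d : ℝ) ^ 2 + (2 * t * (1 - t) / d) * lam α else 0)
      + t ^ 2 * Real.sqrt (lam α * lam β)

/-- `S₂(λ) = -∑ g_α log g_α` where `g_α` are the eigenvalues of `G(λ)`
(junk value `0` if `G(λ)` were not Hermitian). -/
noncomputable def S2 (d : ℕ) (t : ℝ) (lam : Fin d → ℝ) : ℝ :=
  if h : (Gmat d t lam).IsHermitian then ∑ α, Real.negMulLog (h.eigenvalues α) else 0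

/-- `x` is majorized by `y`: the sums agree and, for each `k`, the largest sum of `k`
entries of `x` is at most the largest sum of `k` entries of `y`. -/
def MajorizedBy {d : ℕ} (x y : Fin d → ℝ) : Prop :=
  (∑ i, x i = ∑ i, y i) ∧
    ∀ A : Finset (Fin d), ∃ B : Finset (Fin d),
      B.card = A.card ∧ ∑ i ∈ A, x i ≤ ∑ i ∈ B, y i

/-! ### Symmetric functions and the shifted determinants -/

/-- `∏_{b ∈ R} μ_b`, where `μ_b = c - k y_b`: the top elementary symmetric polynomial. -/
noncomputable def prodOn {ι : Type*} (c k : ℝ) (R : Finset ι) (y : ι → ℝ) : ℝ :=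
  ∏ b ∈ R, (c - k * y b)

/-- `∑_{a ∈ R} y_a ∏_{b ∈ R, b ≠ a} μ_b`, where `μ_b = c - k y_b`. -/
noncomputable def wsumOn {ι : Type*} [DecidableEq ι] (c k : ℝ) (R : Finset ι) (y : ι → ℝ) : ℝ :=
  ∑ a ∈ R, y a * ∏ b ∈ R.erase a, (c - k * y b)

lemma prodOn_insert {ι : Type*} [DecidableEq ι] (c k : ℝ) (R : Finset ι) (y : ι → ℝ) {a : ι}
    (ha : a ∉ R) : prodOn c k (insert a R) y = (c - k * y a) * prodOn c k R y := by
  simp [prodOn, Finset.prod_insert ha]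

lemma wsumOn_insert {ι : Type*} [DecidableEq ι] (c k : ℝ) (R : Finset ι) (y : ι → ℝ) {a : ι}
    (ha : a ∉ R) :
    wsumOn c k (insert a R) y = y a * prodOn c k R y + (c - k * y a) * wsumOn c k R y := by
  unfold wsumOn prodOn
  rw [Finset.sum_insert ha, Finset.erase_insert ha, Finset.mul_sum]
  congr 1
  refine Finset.sum_congr rfl fun b hb => ?_
  have hab : a ≠ b := fun h => ha (h ▸ hb)
  rw [Finset.erase_insert_of_ne hab,
    Finset.prod_insert (fun h => ha (Finset.mem_of_mem_erase h))]
  ring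

/-- If the factor `μ_m` is non-positive then, because `k < 2c` and the weights sum to at most `1`,
all other factors are at least `c - k (1 - y_m) > 0`. Bounding them below by this number reduces the
sign of `r ∏ μ + q ∑ y_a ∏_{b ≠ a} μ_b` to that of a polynomial which is affine in
`p = y_m (1 - y_m) ∈ [0, 1/4]`. -/
lemma exists_lower_bound {ι : Type*} [DecidableEq ι] {c k q r : ℝ} {R : Finset ι} {y : ι → ℝ}
    (hk : 0 ≤ k) (hkc : k < 2 * c) (hq : 0 ≤ q)
    (hy : ∀ i ∈ R, 0 ≤ y i) (hsum : ∑ i ∈ R, y i ≤ 1) {m : ι} (hm : m ∈ R)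
    (hneg : c - k * y m ≤ 0) :
    ∃ P D p : ℝ, 0 < P ∧ 0 < D ∧ 0 ≤ p ∧ p ≤ 1 / 4 ∧
      P * (r * (c ^ 2 - k * c + k ^ 2 * p) + q * (c - 2 * k * p))
        ≤ D * (r * prodOn c k R y + q * wsumOn c k R y) := by
  obtain ⟨S, hmS, rfl⟩ : ∃ S, m ∉ S ∧ insert m S = R :=
    ⟨R.erase m, Finset.notMem_erase m R, Finset.insert_erase hm⟩
  rw [Finset.sum_insert hmS] at hsum
  have hym : 0 ≤ y m := hy m (Finset.mem_insert_self _ _)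
  have hyS : ∀ i ∈ S, 0 ≤ y i := fun i hi => hy i (Finset.mem_insert_of_mem hi)
  have hS0 : 0 ≤ ∑ i ∈ S, y i := Finset.sum_nonneg hyS
  have hD : 0 < c - k * (1 - y m) := by nlinarith
  have hμ : ∀ b ∈ S, c - k * (1 - y m) ≤ c - k * y b := by
    intro b hb
    have : y b ≤ ∑ i ∈ S, y i := Finset.single_le_sum hyS hb
    nlinarith
  have hP : 0 < prodOn c k S y := Finset.prod_pos fun b hb => lt_of_lt_of_le hD (hμ b hb)
  have hW : (c - k * (1 - y m)) * wsumOn c k S y ≤ (1 - y m) * prodOn c k S y := by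
    calc (c - k * (1 - y m)) * wsumOn c k S y
        ≤ ∑ a ∈ S, y a * prodOn c k S y := by
          unfold wsumOn
          rw [Finset.mul_sum]
          refine Finset.sum_le_sum fun a ha => ?_
          have h1 : prodOn c k S y = (c - k * y a) * ∏ b ∈ S.erase a, (c - k * y b) :=
            (Finset.mul_prod_erase S _ ha).symm
          have h2 : 0 ≤ ∏ b ∈ S.erase a, (c - k * y b) := Finset.prod_nonneg fun b hb =>
            (lt_of_lt_of_le hD (hμ b (Finset.mem_of_mem_erase hb))).le
          rw [h1]
          nlinarith [mul_le_mul_of_nonneg_right (hμ a ha) (mul_nonneg (hyS a ha) h2)]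
      _ = (∑ a ∈ S, y a) * prodOn c k S y := by rw [Finset.sum_mul]
      _ ≤ _ := by
          apply mul_le_mul_of_nonneg_right _ hP.le
          linarith
  refine ⟨prodOn c k S y, c - k * (1 - y m), y m * (1 - y m), hP, hD,
    mul_nonneg hym (by linarith), by nlinarith [sq_nonneg (y m - 1 / 2)], ?_⟩
  rw [prodOn_insert _ _ _ _ hmS, wsumOn_insert _ _ _ _ hmS]
  have := mul_le_mul_of_nonneg_left hW (mul_nonneg hq (neg_nonneg.2 hneg))
  nlinarith

/-- `det (s + G(y))` as a polynomial in `y`, with `c = s + c₁`, `k = -c₂`, `q = t²`. -/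
noncomputable def detPoly {ι : Type*} [DecidableEq ι] [Fintype ι] (q c k : ℝ) (y : ι → ℝ) : ℝ :=
  prodOn c k Finset.univ y + q * wsumOn c k Finset.univ y

/-- The parameters of `G` are `q = u²`, `k = 2ua`, `c = s + a²` with `u = -t` and `a = (1 - t) / d`;
the hypothesis `-1/(d-1) ≤ t` says exactly that `u ≤ a`. -/
lemma detPoly_pos {ι : Type*} [DecidableEq ι] [Fintype ι] {u a s : ℝ} (hu : 0 ≤ u) (hua : u ≤ a)
    (hs : 0 < s) {y : ι → ℝ} (hy : ∀ i, 0 ≤ y i) (hsum : ∑ i, y i = 1) :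
    0 < detPoly (u ^ 2) (s + a ^ 2) (2 * u * a) y := by
  have ha : 0 ≤ a := hu.trans hua
  have hk : 0 ≤ 2 * u * a := by positivity
  by_cases h : ∃ m, s + a ^ 2 - 2 * u * a * y m ≤ 0
  · obtain ⟨m, hm⟩ := h
    obtain ⟨P, D, p, hP, hD, hp, -, hle⟩ := exists_lower_bound (r := 1) hk (by nlinarith)
      (sq_nonneg u) (fun i _ => hy i) hsum.le (Finset.mem_univ m) hm
    rw [one_mul, one_mul] at hle
    refine pos_of_mul_pos_right (lt_of_lt_of_le (mul_pos hP ?_) hle) hD.le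
    -- The polynomial equals `c (s + (a - u)²) + 4 u² a p (a - u)`.
    have h1 : 0 < (s + a ^ 2) * (s + (a - u) ^ 2) := by positivity
    have h2 : 0 ≤ 4 * u ^ 2 * a * p * (a - u) :=
      mul_nonneg (by positivity) (by linarith)
    linarith
  · push Not at h
    refine add_pos_of_pos_of_nonneg (Finset.prod_pos fun b _ => h b) ?_
    exact mul_nonneg (sq_nonneg u) (Finset.sum_nonneg fun i _ =>
      mul_nonneg (hy i) (Finset.prod_nonneg fun b _ => (h b).le))

/-- For `y_i + y_j` fixed, `detPoly` is affine in `y_i y_j`; its slope, divided by `4 u² a`, is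
non-negative. Here `R` is the set of the remaining indices. -/
lemma coeff_nonneg {ι : Type*} [DecidableEq ι] {u a s : ℝ} (hu : 0 ≤ u) (hua : u ≤ a)
    (hs : 0 < s) {R : Finset ι} {y : ι → ℝ} (hy : ∀ i ∈ R, 0 ≤ y i) (hsum : ∑ i ∈ R, y i ≤ 1) :
    0 ≤ (a - u) * prodOn (s + a ^ 2) (2 * u * a) R y
      + u ^ 2 * a * wsumOn (s + a ^ 2) (2 * u * a) R y := by
  have ha : 0 ≤ a := hu.trans hua
  have hk : 0 ≤ 2 * u * a := by positivity
  by_cases h : ∃ m ∈ R, s + a ^ 2 - 2 * u * a * y m ≤ 0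
  · obtain ⟨m, hmR, hm⟩ := h
    obtain ⟨P, D, p, hP, hD, hp, hp4, hle⟩ := exists_lower_bound (r := a - u)
      (q := u ^ 2 * a) hk (by nlinarith)
      (by positivity) hy hsum hmR hm
    refine nonneg_of_mul_nonneg_right (le_trans (mul_nonneg hP.le ?_) hle) hD
    -- Affine interpolation between the values at `p = 0` and `p = 1 / 4`.
    have h0 : 0 ≤ (s + a ^ 2) * ((a - u) * s + a * ((a - 3 / 2 * u) ^ 2 + 3 / 4 * u ^ 2)) :=
      mul_nonneg (by positivity)
        (add_nonneg (mul_nonneg (by linarith) hs.le) (by positivity))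
    have h1 : 0 ≤ (a - u) * (s + a ^ 2 - u * a) ^ 2 + u ^ 2 * a * (s + a ^ 2 - u * a) :=
      add_nonneg (mul_nonneg (by linarith) (sq_nonneg _))
        (mul_nonneg (by positivity) (by nlinarith))
    have h2 := mul_nonneg (by linarith : 0 ≤ 1 - 4 * p) h0
    have h3 := mul_nonneg (by linarith : 0 ≤ 4 * p) h1
    linear_combination h2 + h3
  · push Not at h
    refine add_nonneg (mul_nonneg (by linarith) (Finset.prod_nonneg fun b hb => (h b hb).le)) ?_
    exact mul_nonneg (by positivity) (Finset.sum_nonneg fun i hi =>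
      mul_nonneg (hy i hi) (Finset.prod_nonneg fun b hb => (h b (Finset.mem_of_mem_erase hb)).le))

/-- Moving mass `δ` from `y_i` to the smaller `y_j`, without overshooting, increases `detPoly`: only
the product `y_i y_j` changes, and it increases. -/
lemma detPoly_transfer {ι : Type*} [DecidableEq ι] [Fintype ι] {u a s : ℝ} (hu : 0 ≤ u)
    (hua : u ≤ a) (hs : 0 < s) {y y' : ι → ℝ} (hy : ∀ i, 0 ≤ y i) (hsum : ∑ i, y i = 1)
    {i j : ι} (hij : i ≠ j) {δ : ℝ} (hδ : 0 ≤ δ) (hδ' : δ ≤ y i - y j)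
    (hi : y' i = y i - δ) (hj : y' j = y j + δ) (hl : ∀ l, l ≠ i → l ≠ j → y' l = y l) :
    detPoly (u ^ 2) (s + a ^ 2) (2 * u * a) y ≤ detPoly (u ^ 2) (s + a ^ 2) (2 * u * a) y' := by
  obtain ⟨R, hjR, hiR, hR⟩ : ∃ R : Finset ι, j ∉ R ∧ i ∉ insert j R ∧
      insert i (insert j R) = Finset.univ := by
    refine ⟨(Finset.univ.erase i).erase j, by simp, by simp [hij], ?_⟩
    rw [Finset.insert_erase (by simp [hij.symm]), Finset.insert_erase (by simp)]
  have hR' : ∀ l ∈ R, y' l = y l := fun l hlR =>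
    hl l (fun h => hiR (h ▸ Finset.mem_insert_of_mem hlR)) (fun h => hjR (h ▸ hlR))
  have hsR : ∑ l ∈ R, y l ≤ 1 := by
    rw [← hsum]
    exact Finset.sum_le_sum_of_subset_of_nonneg (Finset.subset_univ R) fun l _ _ => hy l
  have hK := coeff_nonneg hu hua hs (fun l (_ : l ∈ R) => hy l) hsR
  have hP : prodOn (s + a ^ 2) (2 * u * a) R y' = prodOn (s + a ^ 2) (2 * u * a) R y :=
    Finset.prod_congr rfl fun l h => by rw [hR' l h]
  have hW : wsumOn (s + a ^ 2) (2 * u * a) R y' = wsumOn (s + a ^ 2) (2 * u * a) R y :=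
    Finset.sum_congr rfl fun l h => by
      rw [hR' l h]
      congr 1
      exact Finset.prod_congr rfl fun b hb => by rw [hR' b (Finset.mem_of_mem_erase hb)]
  unfold detPoly
  rw [← hR]
  simp only [prodOn_insert _ _ _ _ hiR, wsumOn_insert _ _ _ _ hiR, prodOn_insert _ _ _ _ hjR,
    wsumOn_insert _ _ _ _ hjR, hP, hW, hi, hj]
  have hpos : 0 ≤ δ * (y i - y j - δ) := mul_nonneg hδ (by linarith)
  have ha : 0 ≤ a := hu.trans hua
  have := mul_nonneg (mul_nonneg (by positivity : 0 ≤ 4 * u ^ 2 * a) hK) hpos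
  linear_combination this

lemma detPoly_comp_perm {ι : Type*} [DecidableEq ι] [Fintype ι] (q c k : ℝ) (y : ι → ℝ)
    (σ : Equiv.Perm ι) : detPoly q c k (y ∘ σ) = detPoly q c k y := by
  unfold detPoly prodOn wsumOn
  have h : ∀ a, ∏ b ∈ Finset.univ.erase a, (c - k * (y ∘ σ) b)
      = ∏ b ∈ Finset.univ.erase (σ a), (c - k * y b) := by
    intro a
    refine Finset.prod_bij (fun b _ => σ b) ?_ ?_ ?_ ?_
    · intro b hb; simpa using hb
    · intro b _ b' _ h; exact σ.injective h
    · intro b hb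
      exact ⟨σ.symm b, by simpa [Equiv.symm_apply_eq] using hb, by simp⟩
    · intro b _; rfl
  simp only [h]
  congr 1
  · exact Equiv.prod_comp σ fun b => c - k * y b
  · congr 1
    exact Equiv.sum_comp σ fun a => y a * ∏ b ∈ Finset.univ.erase a, (c - k * y b)

/-! ### The spectrum of `G` -/

lemma det_shift_of_ne {d : ℕ} (μ v : Fin d → ℝ) (q : ℝ) (hμ : ∀ i, μ i ≠ 0) :
    (Matrix.of fun i j => (if i = j then μ i else 0) + q * (v i * v j)).det
      = ∏ i, μ i + q * ∑ i, v i ^ 2 * ∏ b ∈ Finset.univ.erase i, μ b := by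
  have h0 : (Matrix.diagonal μ).det = ∏ i, μ i := Matrix.det_diagonal
  have hne : ∏ i, μ i ≠ 0 := Finset.prod_ne_zero_iff.2 fun i _ => hμ i
  have h1 := Matrix.det_add_replicateCol_mul_replicateRow (ι := Unit) (A := Matrix.diagonal μ)
    (by rw [h0]; exact hne.isUnit) (fun i => q * v i) v
  have h2 : (Matrix.of fun i j => (if i = j then μ i else 0) + q * (v i * v j))
      = Matrix.diagonal μ + Matrix.replicateCol Unit (fun i => q * v i)
        * Matrix.replicateRow Unit v := by
    ext i j
    simp [Matrix.diagonal_apply, Matrix.mul_apply, mul_assoc]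
  have h3 : (Matrix.diagonal μ)⁻¹ = Matrix.diagonal fun i => (μ i)⁻¹ := by
    refine Matrix.inv_eq_right_inv ?_
    rw [Matrix.diagonal_mul_diagonal, ← Matrix.diagonal_one]
    congr 1
    ext i
    simp [hμ i]
  rw [h2, h1, h0, h3]
  simp only [Matrix.det_unique, Matrix.add_apply, Matrix.one_apply_eq, Matrix.mul_apply,
    Matrix.replicateCol_apply, Matrix.replicateRow_apply, Matrix.diagonal_apply, mul_ite, mul_zero,
    Finset.sum_ite_eq', Finset.mem_univ, if_true]
  rw [mul_add, mul_one, Finset.mul_sum, Finset.mul_sum]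
  congr 1
  refine Finset.sum_congr rfl fun i _ => ?_
  rw [← Finset.mul_prod_erase Finset.univ μ (Finset.mem_univ i)]
  have := hμ i
  field_simp

/-- Rank-one perturbation of a diagonal matrix. The invertible case is the matrix determinant lemma;
the general case follows by continuity. -/
lemma det_shift {d : ℕ} (μ v : Fin d → ℝ) (q : ℝ) :
    (Matrix.of fun i j => (if i = j then μ i else 0) + q * (v i * v j)).det
      = ∏ i, μ i + q * ∑ i, v i ^ 2 * ∏ b ∈ Finset.univ.erase i, μ b := by
  have hL : Continuous fun ε : ℝ =>
      (Matrix.of fun i j => (if i = j then μ i + ε else 0) + q * (v i * v j)).det := by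
    refine Continuous.matrix_det (continuous_matrix fun i j => ?_)
    simp only [Matrix.of_apply]
    split_ifs <;> fun_prop
  have hR : Continuous fun ε : ℝ => ∏ i, (μ i + ε)
      + q * ∑ i, v i ^ 2 * ∏ b ∈ Finset.univ.erase i, (μ b + ε) := by fun_prop
  have hev : ∀ᶠ ε in nhdsWithin (0 : ℝ) {0}ᶜ, ∀ i, μ i + ε ≠ 0 := by
    rw [Filter.eventually_all]
    intro i
    by_cases h : μ i = 0
    · filter_upwards [self_mem_nhdsWithin] with ε hε
      simpa [h] using hε
    · refine nhdsWithin_le_nhds ?_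
      have : Filter.Tendsto (fun ε : ℝ => μ i + ε) (nhds 0) (nhds (μ i)) := by
        simpa using (continuous_const.add continuous_id).tendsto (x := (0 : ℝ))
          (f := fun ε : ℝ => μ i + ε)
      exact this.eventually_ne h
  have h := tendsto_nhds_unique
    (((hL.tendsto 0).mono_left nhdsWithin_le_nhds).congr'
      (hev.mono fun ε hε => det_shift_of_ne (fun i => μ i + ε) v q hε))
    ((hR.tendsto 0).mono_left nhdsWithin_le_nhds)
  simpa using h

lemma Gmat_isHermitian (d : ℕ) (t : ℝ) (lam : Fin d → ℝ) : (Gmat d t lam).IsHermitian := by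
  ext i j
  by_cases h : i = j
  · subst h; simp [Gmat]
  · simp [Gmat, h, Ne.symm h, mul_comm]

lemma prod_shift_eigenvalues {d : ℕ} {t s : ℝ} {lam : Fin d → ℝ} (hlam : ∀ i, 0 ≤ lam i)
    (h : (Gmat d t lam).IsHermitian) :
    ∏ i, (s + h.eigenvalues i)
      = detPoly ((-t) ^ 2) (s + ((1 - t) / d) ^ 2) (2 * (-t) * ((1 - t) / d)) lam := by
  have h1 := congrArg (Polynomial.eval (-s)) h.charpoly_eq
  rw [Matrix.eval_charpoly, Polynomial.eval_prod] at h1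
  have h2 : Matrix.scalar (Fin d) (-s) - Gmat d t lam
      = -(Matrix.of fun i j =>
          (if i = j then s + ((1 - t) / d) ^ 2 - 2 * (-t) * ((1 - t) / d) * lam i else 0)
            + (-t) ^ 2 * (√(lam i) * √(lam j))) := by
    ext i j
    by_cases hij : i = j
    · subst hij
      simp [Gmat, Real.sqrt_mul (hlam _)]
      ring
    · simp [Gmat, hij, Real.sqrt_mul (hlam _)]
  rw [h2, Matrix.det_neg, det_shift] at h1
  have h3 : ∏ i, Polynomial.eval (-s) (Polynomial.X - Polynomial.C ((h.eigenvalues i : ℝ) : ℝ))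
      = (-1) ^ Fintype.card (Fin d) * ∏ i, (s + h.eigenvalues i) := by
    rw [← Finset.card_univ, ← Finset.prod_const, ← Finset.prod_mul_distrib]
    refine Finset.prod_congr rfl fun i _ => ?_
    simp
    ring
  have h4 := h1.trans h3
  have h5 := mul_left_cancel₀ (pow_ne_zero _ (by norm_num : (-1 : ℝ) ≠ 0)) h4
  rw [← h5]
  unfold detPoly prodOn wsumOn
  simp only [Real.sq_sqrt (hlam _)]

lemma sum_eigenvalues {d : ℕ} {t : ℝ} {lam : Fin d → ℝ} (hlam : lam ∈ stdSimplex ℝ (Fin d))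
    (h : (Gmat d t lam).IsHermitian) :
    ∑ i, h.eigenvalues i
      = d * ((1 - t) ^ 2 / (d : ℝ) ^ 2) + 2 * t * (1 - t) / d + t ^ 2 := by
  have h1 : (Gmat d t lam).trace = ∑ i, h.eigenvalues i := by
    simpa using h.trace_eq_sum_eigenvalues
  rw [← h1]
  simp only [Matrix.trace, Matrix.diag_apply, Gmat, Matrix.of_apply, if_true]
  simp only [Real.sqrt_mul_self (hlam.1 _), Finset.sum_add_distrib, ← Finset.mul_sum, hlam.2]
  simp

/-! ### Entropy from shifted determinants -/

/-- Comparison principle: for non-negative families of equal sum, domination of all the shifted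
products gives domination of the entropies. Indeed
`W(s) = ∑ (s + g_i) log (s + g_i) - ∑ (s + g'_i) log (s + g'_i)` is monotone, as its derivative is
the logarithm of the quotient of the products, and tends to `0` at infinity. -/
lemma sum_negMulLog_le {d : ℕ} {g g' : Fin d → ℝ} (hg : ∀ i, 0 ≤ g i) (hg' : ∀ i, 0 ≤ g' i)
    (hsum : ∑ i, g i = ∑ i, g' i)
    (hprod : ∀ s > 0, ∏ i, (s + g' i) ≤ ∏ i, (s + g i)) :
    ∑ i, Real.negMulLog (g' i) ≤ ∑ i, Real.negMulLog (g i) := by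
  set W : ℝ → ℝ := fun s => ∑ i, ((s + g i) * Real.log (s + g i)
    - (s + g' i) * Real.log (s + g' i)) with hW
  have hcont : Continuous W := by
    refine continuous_finsetSum _ fun i _ => ?_
    exact (Real.continuous_mul_log.comp (by fun_prop : Continuous fun s => s + g i)).sub
      (Real.continuous_mul_log.comp (by fun_prop : Continuous fun s => s + g' i))
  have hder : ∀ s > 0, HasDerivAt W
      (∑ i, (Real.log (s + g i) - Real.log (s + g' i))) s := by
    intro s hs
    refine HasDerivAt.fun_sum fun i _ => ?_
    have aux : ∀ z : ℝ, 0 ≤ z →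
        HasDerivAt (fun s => (s + z) * Real.log (s + z)) (Real.log (s + z) + 1) s := fun z hz => by
      have := (Real.hasDerivAt_mul_log (by positivity : s + z ≠ 0)).comp s
        ((hasDerivAt_id s).add_const z)
      exact this.congr_deriv (mul_one _)
    exact ((aux _ (hg i)).sub (aux _ (hg' i))).congr_deriv (by ring)
  have hmono : MonotoneOn W (Set.Ici 0) := by
    refine monotoneOn_of_deriv_nonneg (convex_Ici 0) hcont.continuousOn ?_ ?_
    · intro s hs
      rw [interior_Ici] at hs
      exact (hder s hs).differentiableAt.differentiableWithinAt
    · intro s hs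
      rw [interior_Ici] at hs
      have hs : 0 < s := hs
      rw [(hder s hs).deriv, Finset.sum_sub_distrib,
        ← Real.log_prod (fun i _ => (add_pos_of_pos_of_nonneg hs (hg i)).ne'),
        ← Real.log_prod (fun i _ => (add_pos_of_pos_of_nonneg hs (hg' i)).ne'), sub_nonneg]
      exact Real.log_le_log
        (Finset.prod_pos fun i _ => add_pos_of_pos_of_nonneg hs (hg' i)) (hprod s hs)
  have hlim : Filter.Tendsto W Filter.atTop (nhds 0) := by
    have aux : ∀ z : ℝ, Filter.Tendsto (fun s : ℝ => (s + z) * Real.log (1 + z / s)) Filter.atTop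
        (nhds z) := by
      intro z
      have h1 := Real.tendsto_mul_log_one_add_div_atTop z
      have h2 : Filter.Tendsto (fun s : ℝ => Real.log (1 + z / s)) Filter.atTop (nhds 0) := by
        have h3 : Filter.Tendsto (fun s : ℝ => 1 + z / s) Filter.atTop (nhds 1) := by
          simpa using (Filter.Tendsto.const_add (1 : ℝ)
            (tendsto_const_nhds.div_atTop Filter.tendsto_id : Filter.Tendsto (fun s : ℝ => z / s)
              Filter.atTop (nhds 0)))
        simpa [Function.comp_def] using (Real.continuousAt_log one_ne_zero).tendsto.comp h3
      have h4 := h1.add (h2.const_mul z)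
      simp only [mul_zero, add_zero] at h4
      exact h4.congr fun s => by ring
    have hl : Filter.Tendsto (fun s : ℝ => ∑ i, ((s + g i) * Real.log (1 + g i / s)
        - (s + g' i) * Real.log (1 + g' i / s))) Filter.atTop (nhds (∑ i, (g i - g' i))) :=
      tendsto_finsetSum _ fun i _ => (aux _).sub (aux _)
    rw [Finset.sum_sub_distrib, hsum, sub_self] at hl
    refine hl.congr' ?_
    filter_upwards [Filter.eventually_gt_atTop 0] with s hs
    -- The terms `(s + g_i) log s` and `(s + g'_i) log s` cancel since the sums agree.
    have e : ∀ z : ℝ, 0 ≤ z →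
        (s + z) * Real.log (1 + z / s) = (s + z) * Real.log (s + z) - (s + z) * Real.log s := by
      intro z hz
      have : 1 + z / s = (s + z) / s := by field_simp
      rw [this, Real.log_div (by positivity) hs.ne']
      ring
    have hc : ∑ i, ((s + g i) * Real.log s) = ∑ i, ((s + g' i) * Real.log s) := by
      rw [← Finset.sum_mul, ← Finset.sum_mul, Finset.sum_add_distrib, Finset.sum_add_distrib, hsum]
    simp only [hW, e _ (hg _), e _ (hg' _), Finset.sum_sub_distrib]
    linarith
  have h0 : W 0 ≤ 0 := by
    refine ge_of_tendsto hlim ?_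
    filter_upwards [Filter.eventually_ge_atTop 0] with s hs
    exact hmono Set.self_mem_Ici hs hs
  simp only [hW, zero_add, Finset.sum_sub_distrib] at h0
  simp only [Real.negMulLog, neg_mul, Finset.sum_neg_distrib]
  linarith

/-! ### Majorization -/

/-- Hardy–Littlewood–Pólya: if the prefix sums of `y` dominate those of the decreasing vector `x`,
then `x` is reached from `y` by finitely many transfers towards equality, so that a function which
increases along transfers satisfies `F y ≤ F x`. The induction is on the number of indices at which
`x` and `y` differ; `y` need not be sorted. -/
lemma le_of_prefix_sums {d : ℕ} {F : (Fin d → ℝ) → ℝ} {x : Fin d → ℝ} (hx : Antitone x)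
    (hx0 : ∀ i, 0 ≤ x i) (hxs : ∑ i, x i = 1)
    (hstep : ∀ (y y' : Fin d → ℝ) (i j : Fin d) (δ : ℝ), (∀ l, 0 ≤ y l) → ∑ l, y l = 1 → i ≠ j →
      0 ≤ δ → δ ≤ y i - y j → y' i = y i - δ → y' j = y j + δ →
      (∀ l, l ≠ i → l ≠ j → y' l = y l) → F y ≤ F y') :
    ∀ (n : ℕ) (y : Fin d → ℝ), (Finset.univ.filter fun i => x i ≠ y i).card ≤ n →
      (∀ i, 0 ≤ y i) → ∑ i, y i = 1 →
      (∀ m, ∑ i ∈ Finset.Iic m, x i ≤ ∑ i ∈ Finset.Iic m, y i) → F y ≤ F x := by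
  intro n
  induction n with
  | zero =>
    intro y hn _ _ _
    have h : ∀ i, x i = y i := by simpa [Finset.filter_eq_empty_iff] using hn
    exact (congrArg F (funext h)).ge
  | succ n ih =>
    intro y hn hy0 hys hpre
    by_cases hxy : x = y
    · exact hxy ▸ le_rfl
    -- `k` is the first index with `y k < x k`, and `j < k` some index with `x j < y j`.
    have hex : (Finset.univ.filter fun i => y i < x i).Nonempty := by
      by_contra hne
      have hle : ∀ i, x i ≤ y i := by
        simpa [Finset.filter_eq_empty_iff] using hne
      refine hxy (funext fun i => ?_)
      exact (Finset.sum_eq_sum_iff_of_le fun i _ => hle i).1 (hxs.trans hys.symm) i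
        (Finset.mem_univ i)
    obtain ⟨k, hk, hkmin⟩ : ∃ k, y k < x k ∧ ∀ i < k, x i ≤ y i := by
      obtain ⟨S, hS⟩ : ∃ S : Finset (Fin d), ∀ i, i ∈ S ↔ y i < x i :=
        ⟨Finset.univ.filter fun i => y i < x i, fun i => by simp⟩
      have hSne : S.Nonempty := by
        obtain ⟨i, hi⟩ := hex
        exact ⟨i, (hS i).2 (by simpa using hi)⟩
      refine ⟨S.min' hSne, (hS _).1 (S.min'_mem hSne), fun i hi => ?_⟩
      by_contra hlt
      exact absurd (S.min'_le i ((hS i).2 (not_le.1 hlt))) (not_le.2 hi)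
    obtain ⟨j, hjk, hj⟩ : ∃ j, j < k ∧ x j < y j := by
      by_contra hne
      push Not at hne
      refine absurd (hpre k) (not_le.2 ?_)
      refine Finset.sum_lt_sum (fun i hi => ?_) ⟨k, Finset.mem_Iic.2 le_rfl, hk⟩
      rcases (Finset.mem_Iic.1 hi).lt_or_eq with h | h
      · exact hne i h
      · exact h ▸ hk.le
    have hxjk : x k ≤ x j := hx hjk.le
    obtain ⟨δ, hδ0, hδj, hδk, hδor⟩ : ∃ δ, 0 ≤ δ ∧ δ ≤ y j - x j ∧ δ ≤ x k - y k ∧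
        (δ = y j - x j ∨ δ = x k - y k) :=
      ⟨min (y j - x j) (x k - y k), le_min (by linarith) (by linarith), min_le_left _ _,
        min_le_right _ _, min_choice _ _⟩
    set y' : Fin d → ℝ := fun l => y l + ((if l = k then δ else 0) - (if l = j then δ else 0))
      with hy'
    have e1 : y' j = y j - δ := by simp [hy', hjk.ne]; ring
    have e2 : y' k = y k + δ := by simp [hy', hjk.ne']
    have e3 : ∀ l, l ≠ j → l ≠ k → y' l = y l := fun l h1 h2 => by simp [hy', h1, h2]
    refine (hstep y y' j k δ hy0 hys hjk.ne hδ0 (by linarith) e1 e2 e3).trans (ih y' ?_ ?_ ?_ ?_)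
    · refine Nat.le_of_lt_succ (lt_of_lt_of_le (Finset.card_lt_card ?_) hn)
      refine Finset.ssubset_iff_subset_ne.2 ⟨fun l hl => ?_, fun heq => ?_⟩
      · simp only [Finset.mem_filter, Finset.mem_univ, true_and] at hl ⊢
        by_cases h1 : l = j
        · exact h1 ▸ hj.ne
        by_cases h2 : l = k
        · exact h2 ▸ hk.ne'
        rwa [e3 l h1 h2] at hl
      · rcases hδor with h | h
        · have : j ∈ Finset.univ.filter fun i => x i ≠ y' i := by rw [heq]; simp [hj.ne]
          rw [Finset.mem_filter] at this
          exact this.2 (by rw [e1]; linarith)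
        · have : k ∈ Finset.univ.filter fun i => x i ≠ y' i := by rw [heq]; simp [hk.ne']
          rw [Finset.mem_filter] at this
          exact this.2 (by rw [e2]; linarith)
    · intro l
      by_cases h1 : l = j
      · subst h1; rw [e1]; linarith [hx0 l]
      by_cases h2 : l = k
      · subst h2; rw [e2]; linarith [hy0 l]
      rw [e3 l h1 h2]; exact hy0 l
    · simp [hy', Finset.sum_add_distrib, Finset.sum_sub_distrib, hys]
    · intro m
      simp only [hy', Finset.sum_add_distrib, Finset.sum_sub_distrib, Finset.sum_ite_eq',
        Finset.mem_Iic]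
      have := hpre m
      by_cases h1 : k ≤ m
      · simp [h1, hjk.le.trans h1, this]
      by_cases h2 : j ≤ m
      -- Before `k` all the differences `y i - x i` are non-negative, so if `j ≤ m < k` the slack
      -- of the prefix sum is at least `y j - x j ≥ δ`.
      · have h3 : y j - x j ≤ ∑ i ∈ Finset.Iic m, (y i - x i) :=
          Finset.single_le_sum (f := fun i => y i - x i) (fun i hi => sub_nonneg.2
            (hkmin i (lt_of_le_of_lt (Finset.mem_Iic.1 hi) (not_le.1 h1)))) (Finset.mem_Iic.2 h2)
        rw [Finset.sum_sub_distrib] at h3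
        simp only [h1, h2, if_true, if_false]
        linarith
      · simp [h1, h2, this]

/-- Among the sums of `m + 1` entries of a decreasing vector the prefix sum is the largest. -/
lemma sum_le_prefix_sum {d : ℕ} {y : Fin d → ℝ} (hy : Antitone y) (m : Fin d)
    {B : Finset (Fin d)} (hB : B.card = (Finset.Iic m).card) :
    ∑ i ∈ B, y i ≤ ∑ i ∈ Finset.Iic m, y i := by
  have h1 : ∑ i ∈ B, (y i - y m) ≤ ∑ i ∈ Finset.Iic m, (y i - y m) := by
    calc ∑ i ∈ B, (y i - y m) ≤ ∑ i ∈ B ∩ Finset.Iic m, (y i - y m) := by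
          rw [← Finset.sum_inter_add_sum_sdiff B (Finset.Iic m)]
          refine add_le_of_nonpos_right (Finset.sum_nonpos fun i hi => sub_nonpos.2 (hy ?_))
          simp only [Finset.mem_sdiff, Finset.mem_Iic, not_le] at hi
          exact hi.2.le
      _ ≤ _ := Finset.sum_le_sum_of_subset_of_nonneg Finset.inter_subset_right fun i hi _ =>
          sub_nonneg.2 (hy (Finset.mem_Iic.1 hi))
  simp only [Finset.sum_sub_distrib, Finset.sum_const, hB] at h1
  linarith

lemma exists_perm_antitone {d : ℕ} (x : Fin d → ℝ) : ∃ σ : Equiv.Perm (Fin d), Antitone (x ∘ σ) :=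
  ⟨Tuple.sort fun i => -x i, fun i j hij => by
    simpa using Tuple.monotone_sort (fun i => -x i) hij⟩

lemma detPoly_le_of_majorizedBy {d : ℕ} {u a s : ℝ} (hu : 0 ≤ u) (hua : u ≤ a) (hs : 0 < s)
    {x y : Fin d → ℝ} (hx : x ∈ stdSimplex ℝ (Fin d)) (hy : y ∈ stdSimplex ℝ (Fin d))
    (hmaj : MajorizedBy x y) :
    detPoly (u ^ 2) (s + a ^ 2) (2 * u * a) y ≤ detPoly (u ^ 2) (s + a ^ 2) (2 * u * a) x := by
  obtain ⟨σ, hσ⟩ := exists_perm_antitone x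
  obtain ⟨τ, hτ⟩ := exists_perm_antitone y
  rw [← detPoly_comp_perm _ _ _ x σ, ← detPoly_comp_perm _ _ _ y τ]
  refine le_of_prefix_sums hσ (fun i => hx.1 _) ((Equiv.sum_comp σ x).trans hx.2)
    (fun y y' i j δ h1 h2 h3 h4 h5 h6 h7 h8 =>
      detPoly_transfer hu hua hs h1 h2 h3 h4 h5 h6 h7 h8) _ _ le_rfl (fun i => hy.1 _)
    ((Equiv.sum_comp τ y).trans hy.2) fun m => ?_
  obtain ⟨B, hB, hle⟩ := hmaj.2 ((Finset.Iic m).map σ.toEmbedding)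
  rw [Finset.sum_map] at hle
  refine hle.trans ?_
  have h1 := sum_le_prefix_sum hτ m (B := B.map τ.symm.toEmbedding) (by simpa using hB)
  rw [Finset.sum_map] at h1
  simpa using h1

/-- `G(λ)` is positive semidefinite on the simplex, although its diagonal part need not be. -/
lemma eigenvalues_nonneg {d : ℕ} {t : ℝ} (ht : t ≤ 0) (hta : -t ≤ (1 - t) / d) {lam : Fin d → ℝ}
    (hlam : lam ∈ stdSimplex ℝ (Fin d)) (h : (Gmat d t lam).IsHermitian) (i : Fin d) :
    0 ≤ h.eigenvalues i := by
  by_contra hneg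
  -- Otherwise `det (s + G)` vanishes at the positive number `s = -g_i`.
  have h1 := prod_shift_eigenvalues (s := -h.eigenvalues i) hlam.1 h
  rw [Finset.prod_eq_zero (Finset.mem_univ i) (neg_add_cancel _)] at h1
  exact (detPoly_pos (neg_nonneg.2 ht) hta (by linarith) hlam.1 hlam.2).ne h1

/-- `S₂` is Schur-concave on the simplex `Σ_d` for `-1/(d-1) ≤ t ≤ 0`. -/
theorem S2_schurConcave (d : ℕ) (hd : 2 ≤ d) (t : ℝ)
    (ht₁ : -(1 / ((d : ℝ) - 1)) ≤ t) (ht₂ : t ≤ 0)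
    (lam lam' : Fin d → ℝ)
    (hlam : lam ∈ stdSimplex ℝ (Fin d)) (hlam' : lam' ∈ stdSimplex ℝ (Fin d))
    (hmaj : MajorizedBy lam lam') :
    S2 d t lam' ≤ S2 d t lam := by
  have hd0 : (2 : ℝ) ≤ d := by exact_mod_cast hd
  have hu : 0 ≤ -t := neg_nonneg.2 ht₂
  have hta : -t ≤ (1 - t) / d := by
    have h1 : 1 / ((d : ℝ) - 1) * ((d : ℝ) - 1) = 1 := div_mul_cancel₀ _ (by linarith)
    rw [le_div_iff₀ (by linarith)]
    nlinarith
  have h := Gmat_isHermitian d t lam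
  have h' := Gmat_isHermitian d t lam'
  rw [S2, S2, dif_pos h, dif_pos h']
  refine sum_negMulLog_le (eigenvalues_nonneg ht₂ hta hlam h)
    (eigenvalues_nonneg ht₂ hta hlam' h')
    ((sum_eigenvalues hlam h).trans (sum_eigenvalues hlam' h').symm) fun s hs => ?_
  rw [prod_shift_eigenvalues hlam.1, prod_shift_eigenvalues hlam'.1]
  exact detPoly_le_of_majorizedBy hu hta hs hlam hlam' hmaj
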